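/- In the HiOCO setting with zero local delay, the dynamic regret satisfies: Σ_{t=1}^{T} (f_t(x_t) − f_t(x_t*)) ≤ τ·D·R + (D/(1 − η^{(J_l+J_r)/2})) · ( τ·R + τ·Π* + (√β/(1 − √η))·Δ ). -/

import Mathlib

open scoped RealInnerProductSpace

lemma hio_proj {E : Type*} [NormedAddCommGroup E] [InnerProductSpace ℝ E]
    {X : Set E} (hX : Convex ℝ X) {u p : E} (hp : p ∈ X)
    (h : ∀ v ∈ X, ‖u - p‖ ≤ ‖u - v‖) : ∀ w ∈ X, ⟪u - p, w - p⟫ ≤ 0 := by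
  haveI : Nonempty X := ⟨⟨p, hp⟩⟩
  refine (norm_eq_iInf_iff_real_inner_le_zero hX hp).1 ?_
  apply le_antisymm
  · exact le_ciInf fun w => h w w.2
  · exact ciInf_le (f := fun w : X => ‖u - w‖)
      ⟨0, by rintro _ ⟨w, rfl⟩; exact norm_nonneg _⟩ ⟨p, hp⟩

lemma hio_opt {E : Type*} [NormedAddCommGroup E] [InnerProductSpace ℝ E]
    {X : Set E} (hX : Convex ℝ X) (f : E → ℝ) (G s p : E) (L : ℝ) (hL : 0 < L)
    (hs : s ∈ X) (hp : p ∈ X)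
    (hsm : ∀ b ∈ X, f b ≤ f s + ⟪G, b - s⟫ + L / 2 * ‖b - s‖ ^ 2)
    (hmin : ∀ b ∈ X, f s ≤ f b) : 0 ≤ ⟪G, p - s⟫ := by
  have key : ∀ r : ℝ, 0 < r → r ≤ 1 → 0 ≤ ⟪G, p - s⟫ + r * (L / 2 * ‖p - s‖ ^ 2) := by
    intro r hr hr1
    have hb : s + r • (p - s) ∈ X := hX.add_smul_sub_mem hs hp ⟨hr.le, hr1⟩
    have h1 := hsm _ hb
    have h2 := hmin _ hb
    rw [add_sub_cancel_left, inner_smul_right, norm_smul, mul_pow, Real.norm_eq_abs, sq_abs] at h1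
    have : 0 ≤ r * (⟪G, p - s⟫ + r * (L / 2 * ‖p - s‖ ^ 2)) := by nlinarith
    exact nonneg_of_mul_nonneg_right this hr
  by_contra hneg
  push Not at hneg
  set c := ⟪G, p - s⟫ with hc
  set K := L / 2 * ‖p - s‖ ^ 2 with hK
  have hK0 : 0 ≤ K := by positivity
  have h := key (min 1 (-c / (2 * (K + 1)))) (lt_min one_pos (by apply div_pos <;> linarith))
    (min_le_left _ _)
  have h3 : min 1 (-c / (2 * (K + 1))) * K ≤ -c / (2 * (K + 1)) * K :=
    mul_le_mul_of_nonneg_right (min_le_right _ _) hK0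
  have h4 : -c / (2 * (K + 1)) * K ≤ -c / 2 := by
    rw [div_mul_eq_mul_div, div_le_div_iff₀ (by linarith) (by norm_num)]
    nlinarith
  linarith

lemma hio_step {E : Type*} [NormedAddCommGroup E] [InnerProductSpace ℝ E]
    {X : Set E} (hX : Convex ℝ X) (f : E → ℝ) (G : E → E) (s a p g : E) (μ L α γ δ : ℝ)
    (hμ : 0 < μ) (hμL : μ ≤ L) (hLα : L ≤ α) (hγ0 : 0 < γ) (hγ : γ < 2 * μ) (hδ : 0 ≤ δ)
    (hs : s ∈ X) (ha : a ∈ X) (hp : p ∈ X)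
    (hsc : ∀ a ∈ X, ∀ b ∈ X, f a + ⟪G a, b - a⟫ + μ / 2 * ‖b - a‖ ^ 2 ≤ f b)
    (hsm : ∀ a ∈ X, ∀ b ∈ X, f b ≤ f a + ⟪G a, b - a⟫ + L / 2 * ‖b - a‖ ^ 2)
    (hmin : ∀ b ∈ X, f s ≤ f b)
    (hg : ‖g - G a‖ ≤ δ)
    (hpr : ∀ v ∈ X, ‖(a - (1 / α) • g) - p‖ ≤ ‖(a - (1 / α) • g) - v‖) :
    ‖p - s‖ ≤ Real.sqrt ((α - μ) / (α + μ - γ)) * ‖a - s‖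
      + Real.sqrt (1 / (γ * (α + μ - γ))) * δ := by
  have hα : 0 < α := by linarith
  have hden : 0 < α + μ - γ := by linarith
  have h1 := hio_proj hX hp hpr s hs
  have h2 := hio_opt hX f (G s) s p L (by linarith) hs hp (hsm s hs) hmin
  have h3 := hsc s hs p hp
  have h4 := hsc a ha s hs
  have h5 := hsm a ha p hp
  have h6 : -⟪g - G a, p - s⟫ ≤ δ * ‖p - s‖ := by
    have := abs_real_inner_le_norm (g - G a) (p - s)
    have h' := mul_le_mul_of_nonneg_right hg (norm_nonneg (p - s))
    have := neg_abs_le ⟪g - G a, p - s⟫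
    linarith
  have e1 : ⟪(a - (1 / α) • g) - p, s - p⟫ = ⟪a - p, s - p⟫ - (1 / α) * ⟪g, s - p⟫ := by
    rw [sub_right_comm, inner_sub_left, real_inner_smul_left]
  rw [e1] at h1
  have h7 : α * ⟪a - p, s - p⟫ ≤ ⟪g, s - p⟫ := by
    have := mul_le_mul_of_nonneg_left h1 hα.le
    rw [mul_sub, ← mul_assoc, mul_one_div_cancel hα.ne'] at this
    linarith
  have e2 : ‖a - s‖ ^ 2 = ‖p - a‖ ^ 2 + ‖p - s‖ ^ 2 - 2 * ⟪a - p, s - p⟫ := by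
    have := norm_sub_sq_real (a - p) (s - p)
    rw [sub_sub_sub_cancel_right] at this
    rw [this, norm_sub_rev a p, norm_sub_rev s p]; ring
  have e3 : ⟪G a, p - a⟫ - ⟪G a, s - a⟫ = ⟪G a, p - s⟫ := by
    rw [← inner_sub_right, sub_sub_sub_cancel_right]
  have e4 : ⟪g - G a, p - s⟫ = ⟪g, p - s⟫ - ⟪G a, p - s⟫ := inner_sub_left _ _ _
  have e5 : ⟪g, s - p⟫ = - ⟪g, p - s⟫ := by rw [← inner_neg_right, neg_sub]
  rw [norm_sub_rev s a] at h4
  have h8 : (α + μ) * ‖p - s‖ ^ 2 ≤ (α - μ) * ‖a - s‖ ^ 2 + 2 * (δ * ‖p - s‖) := by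
    have : L / 2 * ‖p - a‖ ^ 2 ≤ α / 2 * ‖p - a‖ ^ 2 := by gcongr
    have e2' : α * ‖a - s‖ ^ 2 = α * ‖p - a‖ ^ 2 + α * ‖p - s‖ ^ 2 - 2 * (α * ⟪a - p, s - p⟫) := by
      rw [e2]; ring
    linarith
  have h9 : 2 * (δ * ‖p - s‖) ≤ γ * ‖p - s‖ ^ 2 + δ ^ 2 / γ := by
    have : γ * ‖p - s‖ ^ 2 + δ ^ 2 / γ - 2 * (δ * ‖p - s‖) = (γ * ‖p - s‖ - δ) ^ 2 / γ := by
      field_simp; ring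
    have h' : 0 ≤ (γ * ‖p - s‖ - δ) ^ 2 / γ := by positivity
    linarith
  have hη : 0 ≤ (α - μ) / (α + μ - γ) := div_nonneg (by linarith) hden.le
  have hβ : 0 ≤ 1 / (γ * (α + μ - γ)) := by positivity
  have h10 : ‖p - s‖ ^ 2 ≤ (α - μ) / (α + μ - γ) * ‖a - s‖ ^ 2
      + 1 / (γ * (α + μ - γ)) * δ ^ 2 := by
    have : (α - μ) / (α + μ - γ) * ‖a - s‖ ^ 2 + 1 / (γ * (α + μ - γ)) * δ ^ 2
      = ((α - μ) * ‖a - s‖ ^ 2 + δ ^ 2 / γ) / (α + μ - γ) := by field_simp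
    rw [this, le_div_iff₀ hden]
    linarith
  have hr1 := Real.sq_sqrt hη
  have hr2 := Real.sq_sqrt hβ
  have hn1 := Real.sqrt_nonneg ((α - μ) / (α + μ - γ))
  have hn2 := Real.sqrt_nonneg (1 / (γ * (α + μ - γ)))
  generalize Real.sqrt ((α - μ) / (α + μ - γ)) = q at *
  generalize Real.sqrt (1 / (γ * (α + μ - γ))) = b at *
  rw [← hr1, ← hr2] at h10
  refine le_of_sq_le_sq ?_ (by positivity)
  have : 0 ≤ (q * ‖a - s‖) * (b * δ) := by positivity
  nlinarith

lemma hio_chain {E : Type*} [NormedAddCommGroup E] 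
    {X : Set E} (s : E) (y : ℕ → E) (n : ℕ) (q b δ : ℝ) (hq0 : 0 ≤ q) (hq1 : q < 1)
    (h0 : y 0 ∈ X)
    (hstep : ∀ j, 1 ≤ j → j ≤ n → y (j - 1) ∈ X →
      y j ∈ X ∧ ‖y j - s‖ ≤ q * ‖y (j - 1) - s‖ + b * δ) :
    ∀ j, j ≤ n → y j ∈ X ∧
      ‖y j - s‖ ≤ q ^ j * ‖y 0 - s‖ + b / (1 - q) * ((1 - q ^ j) * δ) := by
  intro j
  induction j with
  | zero => intro _; exact ⟨h0, by simp⟩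
  | succ j ih =>
    intro hj
    obtain ⟨h1, h2⟩ := ih (by omega)
    obtain ⟨h3, h4⟩ := hstep (j + 1) (by omega) hj (by simpa using h1)
    refine ⟨h3, h4.trans ?_⟩
    simp only [Nat.add_sub_cancel]
    have h5 := mul_le_mul_of_nonneg_left h2 hq0
    have h6 : b * δ = b / (1 - q) * ((1 - q) * δ) := by
      have : (1 - q) ≠ 0 := by linarith
      field_simp
    rw [h6]
    refine (add_le_add_left h5 _).trans (le_of_eq ?_)
    ring

lemma hio_path {E : Type*} [NormedAddCommGroup E] (s : ℕ → E) (T τ : ℕ) :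
    ∑ t ∈ Finset.Icc (τ + 1) T, ‖s t - s (t - τ)‖
      ≤ (τ : ℝ) * ∑ t ∈ Finset.Icc 2 T, ‖s t - s (t - 1)‖ := by
  have h1 : ∀ t k, ‖s t - s (t - k)‖ ≤ ∑ i ∈ Finset.range k, ‖s (t - i) - s (t - i - 1)‖ := by
    intro t k
    induction k with
    | zero => simp
    | succ k ih =>
      rw [Finset.sum_range_succ, ← Nat.sub_sub]
      exact (norm_sub_le_norm_sub_add_norm_sub _ (s (t - k)) _).trans (add_le_add_left ih _)
  calc _ ≤ ∑ t ∈ Finset.Icc (τ + 1) T, ∑ i ∈ Finset.range τ, ‖s (t - i) - s (t - i - 1)‖ :=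
        Finset.sum_le_sum fun t _ => h1 t τ
    _ = ∑ i ∈ Finset.range τ, ∑ t ∈ Finset.Icc (τ + 1) T, ‖s (t - i) - s (t - i - 1)‖ :=
        Finset.sum_comm
    _ ≤ ∑ i ∈ Finset.range τ, ∑ t ∈ Finset.Icc 2 T, ‖s t - s (t - 1)‖ := by
        refine Finset.sum_le_sum fun i hi => ?_
        rw [Finset.mem_range] at hi
        rw [← Finset.sum_image (s := Finset.Icc (τ + 1) T) (g := fun t => t - i)
          (f := fun t => ‖s t - s (t - 1)‖)]
        · refine Finset.sum_le_sum_of_subset_of_nonneg ?_ fun _ _ _ => norm_nonneg _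
          intro u hu
          simp only [Finset.mem_image, Finset.mem_Icc] at hu ⊢
          omega
        · intro a ha b hb hab
          simp only [Finset.coe_Icc, Set.mem_Icc] at ha hb hab
          omega
    _ = _ := by simp

lemma hio_shift (d : ℕ → ℝ) (T τ : ℕ) (hd : ∀ t, 1 ≤ t → t ≤ T → 0 ≤ d t) :
    ∑ t ∈ Finset.Icc (τ + 1) T, d (t - τ) ≤ ∑ t ∈ Finset.Icc 1 T, d t := by
  rw [← Finset.sum_image (s := Finset.Icc (τ + 1) T) (g := fun t => t - τ) (f := d)]
  · refine Finset.sum_le_sum_of_subset_of_nonneg ?_ fun u hu _ => ?_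
    · intro u hu
      simp only [Finset.mem_image, Finset.mem_Icc] at hu ⊢
      omega
    · rw [Finset.mem_Icc] at hu; exact hd u hu.1 hu.2
  · intro a ha b hb hab
    simp only [Finset.coe_Icc, Set.mem_Icc] at ha hb hab
    omega

lemma hio_tail (d : ℕ → ℝ) (T τ : ℕ) (hd : ∀ t, 1 ≤ t → t ≤ T → 0 ≤ d t) :
    ∑ t ∈ Finset.Icc (τ + 1) T, d t ≤ ∑ t ∈ Finset.Icc 1 T, d t := by
  refine Finset.sum_le_sum_of_subset_of_nonneg ?_ fun u hu _ => ?_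
  · intro u hu
    simp only [Finset.mem_Icc] at hu ⊢
    omega
  · rw [Finset.mem_Icc] at hu; exact hd u hu.1 hu.2


/-- Theorem 1(i) of the paper: dynamic regret bound for HiOCO with zero local
delay. With `η = (α − μ)/(α + μ − γ)` and `β = 1/(γ(α + μ − γ))`,
`Σ_{t=1}^{T} (f_t(x_t) − f_t(x_t*)) ≤ τDR
  + (D/(1 − (√η)^{J_l+J_r})) (τR + τΠ* + (√β/(1 − √η))Δ)`. -/
theorem stmt_12
    {E : Type*} [NormedAddCommGroup E] [InnerProductSpace ℝ E] [FiniteDimensional ℝ E]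
    (X : Set E) (hXne : X.Nonempty) (hXcp : IsCompact X) (hXconv : Convex ℝ X)
    (R : ℝ) (hR : ∀ a ∈ X, ∀ b ∈ X, ‖a - b‖ ≤ R)
    (T τ Jr Jl : ℕ) (hT : 1 ≤ T) (hτ1 : 1 ≤ τ) (hτT : τ < T) (hJ : 1 ≤ Jr + Jl)
    (μ L α γ : ℝ) (hμ : 0 < μ) (hμL : μ ≤ L) (hLα : L ≤ α)
    (hγ0 : 0 < γ) (hγ : γ < 2 * μ)
    (f : ℕ → E → ℝ) (hdiff : ∀ t, 1 ≤ t → t ≤ T → Differentiable ℝ (f t))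
    (hsc : ∀ t, 1 ≤ t → t ≤ T → ∀ a ∈ X, ∀ b ∈ X,
      f t a + ⟪gradient (f t) a, b - a⟫ + μ / 2 * ‖b - a‖ ^ 2 ≤ f t b)
    (hsm : ∀ t, 1 ≤ t → t ≤ T → ∀ a ∈ X, ∀ b ∈ X,
      f t b ≤ f t a + ⟪gradient (f t) a, b - a⟫ + L / 2 * ‖b - a‖ ^ 2)
    (D : ℝ) (hD : ∀ t, 1 ≤ t → t ≤ T → ∀ x ∈ X, ‖gradient (f t) x‖ ≤ D)
    (xstar : ℕ → E) (hxsX : ∀ t, 1 ≤ t → t ≤ T → xstar t ∈ X)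
    (hxsmin : ∀ t, 1 ≤ t → t ≤ T → ∀ x ∈ X, f t (xstar t) ≤ f t x)
    (δ : ℕ → ℝ) (hδ : ∀ t, 1 ≤ t → t ≤ T → 0 ≤ δ t)
    (x : ℕ → E) (hxX : ∀ t, 1 ≤ t → t ≤ T → x t ∈ X)
    (hiter : ∀ t, τ < t → t ≤ T → ∃ y z : ℕ → E,
      y 0 = x (t - τ) ∧
      (∀ j, 1 ≤ j → j ≤ Jr → ∃ g : E,
        ‖g - gradient (f (t - τ)) (y (j - 1))‖ ≤ δ (t - τ) ∧ y j ∈ X ∧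
        ∀ v ∈ X, ‖(y (j - 1) - (1 / α) • g) - y j‖ ≤ ‖(y (j - 1) - (1 / α) • g) - v‖) ∧
      z 0 = y Jr ∧
      (∀ j, 1 ≤ j → j ≤ Jl → ∃ g : E,
        ‖g - gradient (f t) (z (j - 1))‖ ≤ δ t ∧ z j ∈ X ∧
        ∀ v ∈ X, ‖(z (j - 1) - (1 / α) • g) - z j‖ ≤ ‖(z (j - 1) - (1 / α) • g) - v‖) ∧
      x t = z Jl) :
    ∑ t ∈ Finset.Icc 1 T, (f t (x t) - f t (xstar t))
      ≤ (τ : ℝ) * D * R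
        + D / (1 - Real.sqrt ((α - μ) / (α + μ - γ)) ^ (Jl + Jr))
          * ((τ : ℝ) * R
            + (τ : ℝ) * ∑ t ∈ Finset.Icc 2 T, ‖xstar t - xstar (t - 1)‖
            + Real.sqrt (1 / (γ * (α + μ - γ)))
                / (1 - Real.sqrt ((α - μ) / (α + μ - γ)))
              * ∑ t ∈ Finset.Icc 1 T, δ t) := by
  have hden : 0 < α + μ - γ := by linarith
  have hη : 0 ≤ (α - μ) / (α + μ - γ) := div_nonneg (by linarith) hden.le
  have hη1 : (α - μ) / (α + μ - γ) < 1 := by rw [div_lt_one hden]; linarith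
  have hS := fun t (h1 : 1 ≤ t) (h2 : t ≤ T) (a p g : E) (ha : a ∈ X) (hp : p ∈ X) hg hpr =>
    hio_step hXconv (f t) (gradient (f t)) (xstar t) a p g μ L α γ (δ t) hμ hμL hLα hγ0 hγ
      (hδ t h1 h2) (hxsX t h1 h2) ha hp (hsc t h1 h2) (hsm t h1 h2) (hxsmin t h1 h2) hg hpr
  have hq0 := Real.sqrt_nonneg ((α - μ) / (α + μ - γ))
  have hq1 : Real.sqrt ((α - μ) / (α + μ - γ)) < 1 := by
    rw [Real.sqrt_lt' one_pos]; simpa using hη1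
  have hb0 := Real.sqrt_nonneg (1 / (γ * (α + μ - γ)))
  generalize Real.sqrt ((α - μ) / (α + μ - γ)) = q at *
  generalize Real.sqrt (1 / (γ * (α + μ - γ))) = b at *
  have hD0 : 0 ≤ D := (norm_nonneg _).trans (hD 1 le_rfl hT _ (hxX 1 le_rfl hT))
  have hR0 : 0 ≤ R := (norm_nonneg _).trans (hR _ (hxX 1 le_rfl hT) _ (hxX 1 le_rfl hT))
  have hc0 : 0 ≤ b / (1 - q) := div_nonneg hb0 (by linarith)
  have hqJ : q ^ (Jl + Jr) < 1 := pow_lt_one₀ hq0 hq1 (by omega)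
  have hqn : ∀ n : ℕ, 0 ≤ q ^ n ∧ q ^ n ≤ 1 := fun n =>
    ⟨pow_nonneg hq0 n, pow_le_one₀ hq0 hq1.le⟩
  -- per-round recursion
  have hrec : ∀ t ∈ Finset.Icc (τ + 1) T, ‖x t - xstar t‖ ≤
      q ^ (Jl + Jr) * ‖x (t - τ) - xstar (t - τ)‖ + ‖xstar t - xstar (t - τ)‖
      + b / (1 - q) * (q ^ Jl * (1 - q ^ Jr) * δ (t - τ) + (1 - q ^ Jl) * δ t) := by
    intro t ht
    rw [Finset.mem_Icc] at ht
    obtain ⟨y, z, hy0, hy, hz0, hz, hxz⟩ := hiter t (by omega) ht.2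
    have l1 : 1 ≤ t - τ := by omega
    have l2 : t - τ ≤ T := by omega
    have l3 : 1 ≤ t := by omega
    have c1 := hio_chain (X := X) (xstar (t - τ)) y Jr q b (δ (t - τ)) hq0 hq1
      (hy0 ▸ hxX _ l1 l2) (fun j hj1 hj2 hjX => by
        obtain ⟨g, hg, hyX, hpr⟩ := hy j hj1 hj2
        exact ⟨hyX, hS _ l1 l2 _ _ g hjX hyX hg hpr⟩) Jr le_rfl
    have c2 := hio_chain (X := X) (xstar t) z Jl q b (δ t) hq0 hq1
      (hz0 ▸ c1.1) (fun j hj1 hj2 hjX => by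
        obtain ⟨g, hg, hyX, hpr⟩ := hz j hj1 hj2
        exact ⟨hyX, hS _ l3 ht.2 _ _ g hjX hyX hg hpr⟩) Jl le_rfl
    have c3 := c1.2
    have c4 := c2.2
    rw [hy0] at c3
    rw [hz0, ← hxz] at c4
    have c5 : ‖y Jr - xstar t‖ ≤ ‖y Jr - xstar (t - τ)‖ + ‖xstar t - xstar (t - τ)‖ := by
      rw [norm_sub_rev (xstar t)]; exact norm_sub_le_norm_sub_add_norm_sub _ _ _
    have c6 := mul_le_mul_of_nonneg_left (c5.trans (add_le_add_left c3 _)) (hqn Jl).1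
    have c7 := mul_le_of_le_one_left (norm_nonneg (xstar t - xstar (t - τ))) (hqn Jl).2
    rw [pow_add]
    linarith
  have hsum := Finset.sum_le_sum hrec
  simp only [Finset.sum_add_distrib, ← Finset.mul_sum] at hsum
  have hpath := hio_path xstar T τ
  have hsh1 := hio_shift (fun t => ‖x t - xstar t‖) T τ fun _ _ _ => norm_nonneg _
  have hsh2 := hio_shift δ T τ hδ
  have htl := hio_tail δ T τ hδ
  have hΔ : 0 ≤ ∑ t ∈ Finset.Icc 1 T, δ t := Finset.sum_nonneg fun t ht => by
    rw [Finset.mem_Icc] at ht; exact hδ t ht.1 ht.2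
  have hsplit : ∑ t ∈ Finset.Icc 1 T, ‖x t - xstar t‖
      ≤ (τ : ℝ) * R + ∑ t ∈ Finset.Icc (τ + 1) T, ‖x t - xstar t‖ := by
    have hu : Finset.Icc 1 T = Finset.Icc 1 τ ∪ Finset.Icc (τ + 1) T := by
      ext u; simp only [Finset.mem_union, Finset.mem_Icc]; omega
    have hdj : Disjoint (Finset.Icc 1 τ) (Finset.Icc (τ + 1) T) := by
      rw [Finset.disjoint_left]; intro u; simp only [Finset.mem_Icc]; omega
    rw [hu, Finset.sum_union hdj]
    gcongr
    refine (Finset.sum_le_card_nsmul _ _ R fun u hu => ?_).trans (by simp)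
    rw [Finset.mem_Icc] at hu
    exact hR _ (hxX u hu.1 (by omega)) _ (hxsX u hu.1 (by omega))
  have hreg : ∑ t ∈ Finset.Icc 1 T, (f t (x t) - f t (xstar t))
      ≤ D * ∑ t ∈ Finset.Icc 1 T, ‖x t - xstar t‖ := by
    rw [Finset.mul_sum]
    refine Finset.sum_le_sum fun t ht => ?_
    rw [Finset.mem_Icc] at ht
    have h1 := hsc t ht.1 ht.2 _ (hxX t ht.1 ht.2) _ (hxsX t ht.1 ht.2)
    have h2 := abs_real_inner_le_norm (gradient (f t) (x t)) (xstar t - x t)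
    have h3 := neg_abs_le ⟪gradient (f t) (x t), xstar t - x t⟫
    have h4 := mul_le_mul_of_nonneg_right (hD t ht.1 ht.2 _ (hxX t ht.1 ht.2))
      (norm_nonneg (xstar t - x t))
    have h5 : 0 ≤ μ / 2 * ‖xstar t - x t‖ ^ 2 := by positivity
    rw [norm_sub_rev (x t)]
    linarith
  generalize ∑ t ∈ Finset.Icc 1 T, ‖x t - xstar t‖ = S at *
  generalize ∑ t ∈ Finset.Icc (τ + 1) T, ‖x t - xstar t‖ = S' at *
  generalize ∑ t ∈ Finset.Icc 1 T, δ t = Δ at *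
  generalize ∑ t ∈ Finset.Icc 2 T, ‖xstar t - xstar (t - 1)‖ = P at *
  have k1 := mul_le_mul_of_nonneg_left hsh1 (hqn (Jl + Jr)).1
  have k2 := mul_le_mul_of_nonneg_left hsh2
    (mul_nonneg (hqn Jl).1 (sub_nonneg.2 (hqn Jr).2))
  have k3 := mul_le_mul_of_nonneg_left htl (sub_nonneg.2 (hqn Jl).2)
  have k4 : q ^ Jl * (1 - q ^ Jr) * Δ + (1 - q ^ Jl) * Δ ≤ Δ := by
    have := mul_nonneg (hqn (Jl + Jr)).1 hΔ
    rw [pow_add] at this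
    linarith
  have k5 := mul_le_mul_of_nonneg_left ((add_le_add k2 k3).trans k4) hc0
  have k6 : (1 - q ^ (Jl + Jr)) * S ≤ τ * R + τ * P + b / (1 - q) * Δ := by
    linarith
  have k7 : S ≤ (τ * R + τ * P + b / (1 - q) * Δ) / (1 - q ^ (Jl + Jr)) := by
    rw [le_div_iff₀ (by linarith)]; linarith
  have k8 := mul_le_mul_of_nonneg_left k7 hD0
  have k9 : 0 ≤ (τ : ℝ) * D * R := by positivity
  rw [div_mul_eq_mul_div, ← mul_div_assoc'] 
  linarith
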